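/- Let {X_i : i ∈ 𝒥} satisfy condition (LD4*). For each i let ξ_i be a measurable function of X_i with E ξ_i = 0 and E ξ_i⁴ < ∞, and let η_i be a measurable function of the family {X_j : j ∈ A_i} with E η_i = 0 and E η_i⁴ < ∞. Let T = Σ_{i∈𝒥} ξ_i, S = Σ_{i∈𝒥} η_i and κ₂ = max_{i∈𝒥} max(|D_i*|, |{j ∈ 𝒥 : i ∈ D_j*}|). Then E(T² S²) ≤ 3 E T² · E S² + 12 κ₂³ Σ_{i∈𝒥} (E|ξ_i|⁴ + E|η_i|⁴). -/

import Mathlib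

open MeasureTheory ProbabilityTheory Real

/-!
Writing `κ₄` for the fourth joint cumulant,
`E T²S² = E T² E S² + 2 (E TS)² + κ₄(T, T, S, S)`, where `(E TS)² ≤ E T² E S²` by Cauchy–Schwarz.
By multilinearity `κ₄(T, T, S, S)` is the sum of all `κ₄(ξᵢ, ξⱼ, ηₖ, ηₗ)`, each at most
`E ξᵢ⁴ + E ξⱼ⁴ + E ηₖ⁴ + E ηₗ⁴`. A joint cumulant vanishes as soon as its arguments split into two
independent groups, and the nested neighbourhoods `B i ⊆ C i ⊆ D i` produce such a splitting
whenever one of `j`, `k`, `l` lies outside `D i`; only `κ₂³` triples remain for each `i`.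
-/

open scoped Finset

section Moments

variable {Ω : Type*} {mΩ : MeasurableSpace Ω} {μ : Measure Ω} {a b c d : Ω → ℝ}

lemma memLp_natCast_iff_integrable_pow {f : Ω → ℝ} (hf : AEStronglyMeasurable f μ) {n : ℕ}
    (hn : n ≠ 0) (hn_even : Even n) : MemLp f n μ ↔ Integrable (fun ω ↦ f ω ^ n) μ := by
  simpa [hn_even.pow_abs] using
    (integrable_norm_rpow_iff hf (Nat.cast_ne_zero.2 hn) (ENNReal.natCast_ne_top n)).symm

lemma memLp_four_iff_integrable_pow_four {f : Ω → ℝ} (hf : AEStronglyMeasurable f μ) :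
    MemLp f 4 μ ↔ Integrable (fun ω ↦ f ω ^ 4) μ :=
  mod_cast memLp_natCast_iff_integrable_pow hf four_ne_zero (by decide : Even 4)

lemma memLp_two_mul (ha : MemLp a 4 μ) (hb : MemLp b 4 μ) : MemLp (a * b) 2 μ := by
  have : ENNReal.HolderTriple 4 4 2 := ⟨by
    rw [← two_mul, show (4 : ENNReal) = 2 * 2 by norm_num, ENNReal.mul_inv (by simp) (by simp),
      ← mul_assoc, ENNReal.mul_inv_cancel (by simp) (by simp), one_mul]⟩
  exact hb.mul ha

lemma integrable_mul_mul_mul (ha : MemLp a 4 μ) (hb : MemLp b 4 μ) (hc : MemLp c 4 μ)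
    (hd : MemLp d 4 μ) : Integrable (a * b * c * d) μ := by
  simpa only [mul_assoc] using (memLp_two_mul ha hb).integrable_mul (memLp_two_mul hc hd)

lemma sq_integral_mul_le {f g : Ω → ℝ} (hf : MemLp f 2 μ) (hg : MemLp g 2 μ) :
    μ[f * g] ^ 2 ≤ μ[f ^ 2] * μ[g ^ 2] := by
  have inner_toLp {u v : Ω → ℝ} (hu : MemLp u 2 μ) (hv : MemLp v 2 μ) :
      inner ℝ (hu.toLp u) (hv.toLp v) = μ[u * v] := by
    rw [L2.inner_def]
    refine integral_congr_ae ?_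
    filter_upwards [hu.coeFn_toLp, hv.coeFn_toLp] with ω hω hω'
    simp [hω, hω', mul_comm]
  simpa only [inner_toLp, sq] using real_inner_mul_inner_self_le (hf.toLp f) (hg.toLp g)

lemma abs_integral_mul_mul_mul_le (ha : MemLp a 4 μ) (hb : MemLp b 4 μ) (hc : MemLp c 4 μ)
    (hd : MemLp d 4 μ) :
    |μ[a * b * c * d]| ≤ (μ[a ^ 4] + μ[b ^ 4] + μ[c ^ 4] + μ[d ^ 4]) / 4 := by
  have int_pow {f : Ω → ℝ} (hf : MemLp f 4 μ) : Integrable (f ^ 4) μ :=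
    (memLp_four_iff_integrable_pow_four hf.1).1 hf
  have am_gm (w x y z : ℝ) : |w * x * y * z| ≤ (w ^ 4 + x ^ 4 + y ^ 4 + z ^ 4) / 4 := by
    rw [abs_le]
    constructor <;>
    nlinarith [sq_nonneg (w * x - y * z), sq_nonneg (w * x + y * z),
      sq_nonneg (w ^ 2 - x ^ 2), sq_nonneg (y ^ 2 - z ^ 2)]
  calc |μ[a * b * c * d]|
    _ ≤ ∫ ω, |(a * b * c * d) ω| ∂μ := abs_integral_le_integral_abs
    _ ≤ ∫ ω, (a ^ 4 + b ^ 4 + c ^ 4 + d ^ 4) ω / 4 ∂μ :=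
        integral_mono (integrable_mul_mul_mul ha hb hc hd).abs
          ((((int_pow ha).add (int_pow hb)).add (int_pow hc)).add (int_pow hd) |>.div_const 4)
          fun ω ↦ am_gm (a ω) (b ω) (c ω) (d ω)
    _ = (μ[a ^ 4] + μ[b ^ 4] + μ[c ^ 4] + μ[d ^ 4]) / 4 := by
        rw [integral_div, integral_add' (((int_pow ha).add (int_pow hb)).add (int_pow hc))
          (int_pow hd), integral_add' ((int_pow ha).add (int_pow hb)) (int_pow hc),
          integral_add' (int_pow ha) (int_pow hb)]

lemma sq_integral_mul_le_integral_pow_four [IsProbabilityMeasure μ] (ha : MemLp a 4 μ)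
    (hb : MemLp b 4 μ) : μ[a * b] ^ 2 ≤ (μ[a ^ 4] + μ[b ^ 4]) / 2 := by
  have jensen : μ[a * b] ^ 2 ≤ μ[a * b * a * b] := by
    simpa [sq, mul_assoc] using sq_integral_mul_le (memLp_two_mul ha hb) (memLp_const (1 : ℝ))
  linarith [(abs_le.1 (abs_integral_mul_mul_mul_le ha hb ha hb)).2]

lemma integral_sum_mul {ι : Type*} {s : Finset ι} {f : ι → Ω → ℝ} {g : Ω → ℝ}
    (h : ∀ i ∈ s, Integrable (f i * g) μ) : μ[(∑ i ∈ s, f i) * g] = ∑ i ∈ s, μ[f i * g] := by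
  rw [← integral_finsetSum s h]
  simp [Finset.sum_mul]

lemma integral_mul_of_indep {m₁ m₂ : MeasurableSpace Ω} (hm₁ : m₁ ≤ mΩ) (hm₂ : m₂ ≤ mΩ)
    (h : Indep m₁ m₂ μ) (ha : Measurable[m₁] a) (hb : Measurable[m₂] b) :
    μ[a * b] = μ[a] * μ[b] :=
  IndepFun.integral_mul_eq_mul_integral
    ((IndepFun_iff_Indep a b μ).2 (indep_of_indep_of_le h ha.comap_le hb.comap_le))
    (ha.mono hm₁ le_rfl).aestronglyMeasurable (hb.mono hm₂ le_rfl).aestronglyMeasurable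

end Moments

section JointCumulant

variable {Ω : Type*} {mΩ : MeasurableSpace Ω} {μ : Measure Ω} {a b c d : Ω → ℝ}

/-- The fourth joint cumulant of four centred random variables. The terms of the general joint
cumulant that contain a first moment are left out, so for variables that are not centred this is
a different quantity. -/
noncomputable def jointCumulant₄ (μ : Measure Ω) (a b c d : Ω → ℝ) : ℝ :=
  μ[a * b * c * d] - μ[a * b] * μ[c * d] - μ[a * c] * μ[b * d] - μ[a * d] * μ[b * c]

lemma jointCumulant₄_swap_middle (μ : Measure Ω) (a b c d : Ω → ℝ) :
    jointCumulant₄ μ a b c d = jointCumulant₄ μ a c b d := by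
  simp only [jointCumulant₄, mul_right_comm a c b, mul_comm c b]
  ring

lemma jointCumulant₄_swap_right (μ : Measure Ω) (a b c d : Ω → ℝ) :
    jointCumulant₄ μ a b c d = jointCumulant₄ μ a b d c := by
  simp only [jointCumulant₄, mul_right_comm (a * b) d c, mul_comm d c]
  ring

lemma jointCumulant₄_rotate (μ : Measure Ω) (a b c d : Ω → ℝ) :
    jointCumulant₄ μ a b c d = jointCumulant₄ μ b c d a := by
  simp only [jointCumulant₄, mul_comm _ a, mul_assoc]
  ring

lemma integral_sq_mul_sq_eq_add_jointCumulant₄ (μ : Measure Ω) (f g : Ω → ℝ) :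
    μ[f ^ 2 * g ^ 2] = μ[f ^ 2] * μ[g ^ 2] + 2 * μ[f * g] ^ 2 + jointCumulant₄ μ f f g g := by
  simp only [jointCumulant₄, sq, mul_assoc]
  ring

lemma jointCumulant₄_sum_left [IsFiniteMeasure μ] {ι : Type*} {s : Finset ι} {f : ι → Ω → ℝ}
    (hf : ∀ i ∈ s, MemLp (f i) 4 μ) (hb : MemLp b 4 μ) (hc : MemLp c 4 μ) (hd : MemLp d 4 μ) :
    jointCumulant₄ μ (∑ i ∈ s, f i) b c d = ∑ i ∈ s, jointCumulant₄ μ (f i) b c d := by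
  have sum_mul₄ : μ[(∑ i ∈ s, f i) * b * c * d] = ∑ i ∈ s, μ[f i * b * c * d] := by
    simpa only [mul_assoc] using integral_sum_mul (g := b * (c * d)) fun i hi ↦ by
      simpa only [mul_assoc] using integrable_mul_mul_mul (hf i hi) hb hc hd
  have sum_mul₂ {g : Ω → ℝ} (hg : MemLp g 4 μ) :
      μ[(∑ i ∈ s, f i) * g] = ∑ i ∈ s, μ[f i * g] :=
    integral_sum_mul fun i hi ↦ (memLp_two_mul (hf i hi) hg).integrable one_le_two
  rw [jointCumulant₄, sum_mul₄, sum_mul₂ hb, sum_mul₂ hc, sum_mul₂ hd]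
  simp only [jointCumulant₄, Finset.sum_sub_distrib, Finset.sum_mul]

lemma jointCumulant₄_sum [IsFiniteMeasure μ] {ι : Type*} {s : Finset ι} {f g h k : ι → Ω → ℝ}
    (hf : ∀ i, MemLp (f i) 4 μ) (hg : ∀ i, MemLp (g i) 4 μ) (hh : ∀ i, MemLp (h i) 4 μ)
    (hk : ∀ i, MemLp (k i) 4 μ) :
    jointCumulant₄ μ (∑ i ∈ s, f i) (∑ i ∈ s, g i) (∑ i ∈ s, h i) (∑ i ∈ s, k i) =
      ∑ i ∈ s, ∑ j ∈ s, ∑ l ∈ s, ∑ n ∈ s, jointCumulant₄ μ (f i) (g j) (h l) (k n) := by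
  have memLp_sum {u : ι → Ω → ℝ} (hu : ∀ i, MemLp (u i) 4 μ) : MemLp (∑ i ∈ s, u i) 4 μ :=
    memLp_finsetSum' s fun i _ ↦ hu i
  rw [jointCumulant₄_sum_left (fun i _ ↦ hf i) (memLp_sum hg) (memLp_sum hh) (memLp_sum hk)]
  refine Finset.sum_congr rfl fun i _ ↦ ?_
  rw [jointCumulant₄_rotate,
    jointCumulant₄_sum_left (fun j _ ↦ hg j) (memLp_sum hh) (memLp_sum hk) (hf i)]
  refine Finset.sum_congr rfl fun j _ ↦ ?_
  rw [jointCumulant₄_rotate, jointCumulant₄_sum_left (fun l _ ↦ hh l) (memLp_sum hk) (hf i) (hg j)]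
  refine Finset.sum_congr rfl fun l _ ↦ ?_
  rw [jointCumulant₄_rotate, jointCumulant₄_sum_left (fun n _ ↦ hk n) (hf i) (hg j) (hh l)]
  exact Finset.sum_congr rfl fun n _ ↦ jointCumulant₄_rotate μ _ _ _ _

lemma abs_jointCumulant₄_le [IsProbabilityMeasure μ] (ha : MemLp a 4 μ) (hb : MemLp b 4 μ)
    (hc : MemLp c 4 μ) (hd : MemLp d 4 μ) :
    |jointCumulant₄ μ a b c d| ≤ μ[a ^ 4] + μ[b ^ 4] + μ[c ^ 4] + μ[d ^ 4] := by
  have abs_pairing_le {u v w z : Ω → ℝ} (hu : MemLp u 4 μ) (hv : MemLp v 4 μ) (hw : MemLp w 4 μ)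
      (hz : MemLp z 4 μ) :
      |μ[u * v] * μ[w * z]| ≤ (μ[u ^ 4] + μ[v ^ 4] + μ[w ^ 4] + μ[z ^ 4]) / 4 := by
    have huv := sq_integral_mul_le_integral_pow_four hu hv
    have hwz := sq_integral_mul_le_integral_pow_four hw hz
    rw [abs_le]
    constructor <;>
    nlinarith [sq_nonneg (μ[u * v] + μ[w * z]), sq_nonneg (μ[u * v] - μ[w * z])]
  have h₄ := abs_le.1 (abs_integral_mul_mul_mul_le ha hb hc hd)
  have h₁₂ := abs_le.1 (abs_pairing_le ha hb hc hd)
  have h₁₃ := abs_le.1 (abs_pairing_le ha hc hb hd)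
  have h₁₄ := abs_le.1 (abs_pairing_le ha hd hb hc)
  rw [jointCumulant₄, abs_le]
  constructor <;> linarith

variable {m₁ m₂ : MeasurableSpace Ω}

lemma jointCumulant₄_eq_zero_of_indep_left (hm₁ : m₁ ≤ mΩ) (hm₂ : m₂ ≤ mΩ) (h : Indep m₁ m₂ μ)
    (ha : Measurable[m₁] a) (hb : Measurable[m₂] b) (hc : Measurable[m₂] c)
    (hd : Measurable[m₂] d) (ha_mean : μ[a] = 0) : jointCumulant₄ μ a b c d = 0 := by
  have integral_a_mul {f : Ω → ℝ} (hf : Measurable[m₂] f) : μ[a * f] = 0 := by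
    rw [integral_mul_of_indep hm₁ hm₂ h ha hf, ha_mean, zero_mul]
  simp only [jointCumulant₄, mul_assoc a, integral_a_mul (hb.mul (hc.mul hd)), integral_a_mul hb,
    integral_a_mul hc, integral_a_mul hd, mul_assoc, zero_mul, sub_zero]

lemma jointCumulant₄_eq_zero_of_indep_pairs (hm₁ : m₁ ≤ mΩ) (hm₂ : m₂ ≤ mΩ) (h : Indep m₁ m₂ μ)
    (ha : Measurable[m₁] a) (hb : Measurable[m₁] b) (hc : Measurable[m₂] c)
    (hd : Measurable[m₂] d) (ha_mean : μ[a] = 0) : jointCumulant₄ μ a b c d = 0 := by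
  have integral_a_mul {f : Ω → ℝ} (hf : Measurable[m₂] f) : μ[a * f] = 0 := by
    rw [integral_mul_of_indep hm₁ hm₂ h ha hf, ha_mean, zero_mul]
  rw [jointCumulant₄, mul_assoc (a * b), integral_mul_of_indep hm₁ hm₂ h (ha.mul hb) (hc.mul hd),
    integral_a_mul hc, integral_a_mul hd]
  ring

end JointCumulant

section Counting

variable {ι : Type*} [Fintype ι] [DecidableEq ι] {D : ι → Finset ι} {κ : ℕ}

lemma sum_sum_mem_le_mul_sum (hD : ∀ j, #{i | j ∈ D i} ≤ κ) {y : ι → ℝ} (hy : ∀ i, 0 ≤ y i) :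
    ∑ i, ∑ j ∈ D i, y j ≤ κ * ∑ j, y j := by
  calc ∑ i, ∑ j ∈ D i, y j
    _ = ∑ j, ∑ i with j ∈ D i, y j := Finset.sum_comm' (by simp)
    _ = ∑ j, #{i | j ∈ D i} * y j := by simp only [Finset.sum_const, nsmul_eq_mul]
    _ ≤ ∑ j, κ * y j := by gcongr with j; exacts [hy j, hD j]
    _ = κ * ∑ j, y j := (Finset.mul_sum ..).symm

lemma sum_sum_mem_add_le_pow_three_mul_sum (hD : ∀ i, #(D i) ≤ κ)
    (hD' : ∀ j, #{i | j ∈ D i} ≤ κ) {w x y z : ι → ℝ} (hw : ∀ i, 0 ≤ w i) (hx : ∀ i, 0 ≤ x i)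
    (hy : ∀ i, 0 ≤ y i) (hz : ∀ i, 0 ≤ z i) :
    ∑ i, ∑ j ∈ D i, ∑ k ∈ D i, ∑ l ∈ D i, (w i + x j + y k + z l) ≤
      κ ^ 3 * ∑ i, (w i + x i + y i + z i) := by
  have hxyz (i : ι) : 0 ≤ x i + y i + z i := add_nonneg (add_nonneg (hx i) (hy i)) (hz i)
  calc ∑ i, ∑ j ∈ D i, ∑ k ∈ D i, ∑ l ∈ D i, (w i + x j + y k + z l)
    _ = ∑ i, (#(D i) ^ 3 * w i + #(D i) ^ 2 * ∑ j ∈ D i, (x j + y j + z j)) := by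
        refine Finset.sum_congr rfl fun i _ ↦ ?_
        simp only [Finset.sum_add_distrib, Finset.sum_const, nsmul_eq_mul, ← Finset.mul_sum]
        ring
    _ ≤ ∑ i, (κ ^ 3 * w i + κ ^ 2 * ∑ j ∈ D i, (x j + y j + z j)) := by
        gcongr with i
        exacts [hw i, hD i, Finset.sum_nonneg fun j _ ↦ hxyz j, hD i]
    _ = κ ^ 3 * ∑ i, w i + κ ^ 2 * ∑ i, ∑ j ∈ D i, (x j + y j + z j) := by
        rw [Finset.sum_add_distrib, ← Finset.mul_sum, ← Finset.mul_sum]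
    _ ≤ κ ^ 3 * ∑ i, w i + κ ^ 2 * (κ * ∑ j, (x j + y j + z j)) := by
        gcongr
        exact sum_sum_mem_le_mul_sum hD' hxyz
    _ = κ ^ 3 * ∑ i, (w i + x i + y i + z i) := by
        simp only [Finset.sum_add_distrib]
        ring

end Counting

/-- Local dependence of a family of `σ`-algebras `m i` with nested neighbourhoods
`B i ⊆ C i ⊆ D i`. With `m i` generated by `(X_j : j ∈ A_i)`, this is the part of (LD4*) about
`B_i* ⊆ C_i* ⊆ D_i*`. -/
structure LocallyDependent {Ω ι : Type*} {mΩ : MeasurableSpace Ω} (m : ι → MeasurableSpace Ω)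
    (B C D : ι → Finset ι) (μ : Measure Ω) : Prop where
  le (i : ι) : m i ≤ mΩ
  mem (i : ι) : i ∈ B i
  B_subset_C (i : ι) : B i ⊆ C i
  C_subset_D (i : ι) : C i ⊆ D i
  indep_B (i : ι) : Indep (m i) (⨆ l ∉ B i, m l) μ
  indep_B_C (i : ι) : Indep (⨆ l ∈ B i, m l) (⨆ l ∉ C i, m l) μ
  indep_C_D (i : ι) : Indep (⨆ l ∈ C i, m l) (⨆ l ∉ D i, m l) μ

lemma comap_restrict_pi {Ω ι : Type*} {E : ι → Type*} [∀ i, MeasurableSpace (E i)]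
    (Y : ∀ i, Ω → E i) (s : Finset ι) :
    MeasurableSpace.pi.comap (fun ω (l : s) ↦ Y l ω) =
      ⨆ l ∈ s, MeasurableSpace.comap (Y l) inferInstance := by
  rw [MeasurableSpace.comap_process_pi (fun l : s ↦ Y l), iSup_subtype]

lemma locallyDependent_comap_of_indepFun {Ω ι : Type*} {mΩ : MeasurableSpace Ω} {μ : Measure Ω}
    [Fintype ι] [DecidableEq ι] {E : ι → Type*} [∀ i, MeasurableSpace (E i)] {Y : ∀ i, Ω → E i}
    {B C D : ι → Finset ι} (hY : ∀ i, Measurable (Y i)) (mem : ∀ i, i ∈ B i)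
    (hBC : ∀ i, B i ⊆ C i) (hCD : ∀ i, C i ⊆ D i)
    (indep_B : ∀ i, IndepFun (Y i) (fun ω (l : ((B i)ᶜ : Finset ι)) ↦ Y l ω) μ)
    (indep_B_C : ∀ i, IndepFun (fun ω (l : B i) ↦ Y l ω)
      (fun ω (l : ((C i)ᶜ : Finset ι)) ↦ Y l ω) μ)
    (indep_C_D : ∀ i, IndepFun (fun ω (l : C i) ↦ Y l ω)
      (fun ω (l : ((D i)ᶜ : Finset ι)) ↦ Y l ω) μ) :
    LocallyDependent (fun i ↦ MeasurableSpace.comap (Y i) inferInstance) B C D μ where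
  le i := (hY i).comap_le
  mem := mem
  B_subset_C := hBC
  C_subset_D := hCD
  indep_B i := by
    simpa only [IndepFun_iff_Indep, comap_restrict_pi, Finset.mem_compl] using indep_B i
  indep_B_C i := by
    simpa only [IndepFun_iff_Indep, comap_restrict_pi, Finset.mem_compl] using indep_B_C i
  indep_C_D i := by
    simpa only [IndepFun_iff_Indep, comap_restrict_pi, Finset.mem_compl] using indep_C_D i

namespace LocallyDependent

variable {Ω ι : Type*} {mΩ : MeasurableSpace Ω} {μ : Measure Ω} {m : ι → MeasurableSpace Ω}
  {B C D : ι → Finset ι}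

lemma jointCumulant₄_eq_zero (hm : LocallyDependent m B C D μ) {i j k l : ι} {a b c d : Ω → ℝ}
    (ha : Measurable[m i] a) (hb : Measurable[m j] b) (hc : Measurable[m k] c)
    (hd : Measurable[m l] d) (ha_mean : μ[a] = 0) (hd_mean : μ[d] = 0) (hl : l ∉ D i) :
    jointCumulant₄ μ a b c d = 0 := by
  have biSup_le (p : ι → Prop) : ⨆ n, ⨆ _ : p n, m n ≤ mΩ := iSup₂_le fun n _ ↦ hm.le n
  have lift {p : ι → Prop} {n : ι} {f : Ω → ℝ} (hf : Measurable[m n] f) (hn : p n) :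
      Measurable[⨆ n, ⨆ _ : p n, m n] f :=
    hf.mono (le_iSup₂ (f := fun n (_ : p n) ↦ m n) n hn) le_rfl
  have hlC : l ∉ C i := fun h ↦ hl (hm.C_subset_D i h)
  have hiC : i ∈ C i := hm.B_subset_C i (hm.mem i)
  have d_separated (hj : j ∈ C i) (hk : k ∈ C i) : jointCumulant₄ μ a b c d = 0 := by
    rw [← jointCumulant₄_rotate]
    exact jointCumulant₄_eq_zero_of_indep_left (biSup_le _) (biSup_le _) (hm.indep_C_D i).symm
      (lift hd hl) (lift ha hiC) (lift hb hj) (lift hc hk) hd_mean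
  by_cases hj : j ∈ B i <;> by_cases hk : k ∈ B i
  · exact d_separated (hm.B_subset_C i hj) (hm.B_subset_C i hk)
  · by_cases hkC : k ∈ C i
    · exact d_separated (hm.B_subset_C i hj) hkC
    · exact jointCumulant₄_eq_zero_of_indep_pairs (biSup_le _) (biSup_le _) (hm.indep_B_C i)
        (lift ha (hm.mem i)) (lift hb hj) (lift hc hkC) (lift hd hlC) ha_mean
  · by_cases hjC : j ∈ C i
    · exact d_separated hjC (hm.B_subset_C i hk)
    · rw [jointCumulant₄_swap_middle]
      exact jointCumulant₄_eq_zero_of_indep_pairs (biSup_le _) (biSup_le _) (hm.indep_B_C i)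
        (lift ha (hm.mem i)) (lift hc hk) (lift hb hjC) (lift hd hlC) ha_mean
  · exact jointCumulant₄_eq_zero_of_indep_left (hm.le i) (biSup_le _) (hm.indep_B i) ha
      (lift hb hj) (lift hc hk) (lift hd fun h ↦ hlC (hm.B_subset_C i h)) ha_mean

variable [Fintype ι]

lemma jointCumulant₄_sum [IsFiniteMeasure μ] (hm : LocallyDependent m B C D μ)
    {f g h k : ι → Ω → ℝ} (hf : ∀ i, Measurable[m i] (f i)) (hg : ∀ i, Measurable[m i] (g i))
    (hh : ∀ i, Measurable[m i] (h i)) (hk : ∀ i, Measurable[m i] (k i))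
    (hf_mean : ∀ i, μ[f i] = 0) (hg_mean : ∀ i, μ[g i] = 0) (hh_mean : ∀ i, μ[h i] = 0)
    (hk_mean : ∀ i, μ[k i] = 0) (hf4 : ∀ i, MemLp (f i) 4 μ) (hg4 : ∀ i, MemLp (g i) 4 μ)
    (hh4 : ∀ i, MemLp (h i) 4 μ) (hk4 : ∀ i, MemLp (k i) 4 μ) :
    jointCumulant₄ μ (∑ i, f i) (∑ i, g i) (∑ i, h i) (∑ i, k i) =
      ∑ i, ∑ j ∈ D i, ∑ l ∈ D i, ∑ n ∈ D i, jointCumulant₄ μ (f i) (g j) (h l) (k n) := by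
  have sum_restrict (i : ι) {F : ι → ℝ} (hF : ∀ j ∉ D i, F j = 0) : ∑ j, F j = ∑ j ∈ D i, F j :=
    (Finset.sum_subset (Finset.subset_univ _) fun j _ ↦ hF j).symm
  rw [_root_.jointCumulant₄_sum hf4 hg4 hh4 hk4]
  refine Finset.sum_congr rfl fun i _ ↦ ?_
  rw [sum_restrict i fun j hj ↦ Finset.sum_eq_zero fun l _ ↦ Finset.sum_eq_zero fun n _ ↦ ?_]
  · refine Finset.sum_congr rfl fun j _ ↦ ?_
    rw [sum_restrict i fun l hl ↦ Finset.sum_eq_zero fun n _ ↦ ?_]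
    · refine Finset.sum_congr rfl fun l _ ↦ sum_restrict i fun n hn ↦ ?_
      exact hm.jointCumulant₄_eq_zero (hf i) (hg j) (hh l) (hk n) (hf_mean i) (hk_mean n) hn
    · rw [jointCumulant₄_swap_right]
      exact hm.jointCumulant₄_eq_zero (hf i) (hg j) (hk n) (hh l) (hf_mean i) (hh_mean l) hl
  · rw [jointCumulant₄_swap_middle, jointCumulant₄_swap_right]
    exact hm.jointCumulant₄_eq_zero (hf i) (hh l) (hk n) (hg j) (hf_mean i) (hg_mean j) hj

lemma abs_jointCumulant₄_sum_le [IsProbabilityMeasure μ] [DecidableEq ι]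
    (hm : LocallyDependent m B C D μ) {κ : ℕ} (hD : ∀ i, #(D i) ≤ κ)
    (hD' : ∀ j, #{i | j ∈ D i} ≤ κ) {f g h k : ι → Ω → ℝ}
    (hf : ∀ i, Measurable[m i] (f i)) (hg : ∀ i, Measurable[m i] (g i))
    (hh : ∀ i, Measurable[m i] (h i)) (hk : ∀ i, Measurable[m i] (k i))
    (hf_mean : ∀ i, μ[f i] = 0) (hg_mean : ∀ i, μ[g i] = 0) (hh_mean : ∀ i, μ[h i] = 0)
    (hk_mean : ∀ i, μ[k i] = 0) (hf4 : ∀ i, MemLp (f i) 4 μ) (hg4 : ∀ i, MemLp (g i) 4 μ)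
    (hh4 : ∀ i, MemLp (h i) 4 μ) (hk4 : ∀ i, MemLp (k i) 4 μ) :
    |jointCumulant₄ μ (∑ i, f i) (∑ i, g i) (∑ i, h i) (∑ i, k i)| ≤
      κ ^ 3 * ∑ i, (μ[f i ^ 4] + μ[g i ^ 4] + μ[h i ^ 4] + μ[k i ^ 4]) := by
  have pow_four_nonneg (u : Ω → ℝ) : 0 ≤ μ[u ^ 4] :=
    integral_nonneg fun ω ↦ Even.pow_nonneg (by decide) (u ω)
  have abs_sum_le {s : Finset ι} {u v : ι → ℝ} (huv : ∀ i ∈ s, |u i| ≤ v i) :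
      |∑ i ∈ s, u i| ≤ ∑ i ∈ s, v i :=
    (Finset.abs_sum_le_sum_abs u s).trans (Finset.sum_le_sum huv)
  rw [hm.jointCumulant₄_sum hf hg hh hk hf_mean hg_mean hh_mean hk_mean hf4 hg4 hh4 hk4]
  calc |∑ i, ∑ j ∈ D i, ∑ l ∈ D i, ∑ n ∈ D i, jointCumulant₄ μ (f i) (g j) (h l) (k n)|
    _ ≤ ∑ i, ∑ j ∈ D i, ∑ l ∈ D i, ∑ n ∈ D i,
        (μ[f i ^ 4] + μ[g j ^ 4] + μ[h l ^ 4] + μ[k n ^ 4]) :=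
      abs_sum_le fun i _ ↦ abs_sum_le fun j _ ↦ abs_sum_le fun l _ ↦ abs_sum_le fun n _ ↦
        abs_jointCumulant₄_le (hf4 i) (hg4 j) (hh4 l) (hk4 n)
    _ ≤ κ ^ 3 * ∑ i, (μ[f i ^ 4] + μ[g i ^ 4] + μ[h i ^ 4] + μ[k i ^ 4]) :=
      sum_sum_mem_add_le_pow_three_mul_sum hD hD' (fun _ ↦ pow_four_nonneg _)
        (fun _ ↦ pow_four_nonneg _) (fun _ ↦ pow_four_nonneg _) (fun _ ↦ pow_four_nonneg _)

end LocallyDependent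

theorem stmt_16_general {Ω : Type*} {mΩ : MeasurableSpace Ω} {μ : Measure Ω}
    [IsProbabilityMeasure μ] {ι : Type*} [Fintype ι] [DecidableEq ι] {m : ι → MeasurableSpace Ω}
    {B C D : ι → Finset ι} (hm : LocallyDependent m B C D μ) {ξ η : ι → Ω → ℝ}
    (hξ : ∀ i, Measurable[m i] (ξ i)) (hξ_mean : ∀ i, ∫ ω, ξ i ω ∂μ = 0)
    (hξ4 : ∀ i, Integrable (fun ω ↦ ξ i ω ^ 4) μ)
    (hη : ∀ i, Measurable[m i] (η i)) (hη_mean : ∀ i, ∫ ω, η i ω ∂μ = 0)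
    (hη4 : ∀ i, Integrable (fun ω ↦ η i ω ^ 4) μ)
    {κ : ℕ} (hD : ∀ i, #(D i) ≤ κ) (hD' : ∀ j, #{i | j ∈ D i} ≤ κ) :
    ∫ ω, (∑ i, ξ i ω) ^ 2 * (∑ i, η i ω) ^ 2 ∂μ ≤
      3 * (∫ ω, (∑ i, ξ i ω) ^ 2 ∂μ) * (∫ ω, (∑ i, η i ω) ^ 2 ∂μ) +
        2 * κ ^ 3 * ∑ i, (∫ ω, |ξ i ω| ^ 4 ∂μ + ∫ ω, |η i ω| ^ 4 ∂μ) := by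
  have memLp_four {f : ι → Ω → ℝ} (hf : ∀ i, Measurable[m i] (f i))
      (hf4 : ∀ i, Integrable (fun ω ↦ f i ω ^ 4) μ) (i : ι) : MemLp (f i) 4 μ :=
    (memLp_four_iff_integrable_pow_four
      ((hf i).mono (hm.le i) le_rfl).aestronglyMeasurable).2 (hf4 i)
  have hξ4 := memLp_four hξ hξ4
  have hη4 := memLp_four hη hη4
  have memLp_sum {f : ι → Ω → ℝ} (hf : ∀ i, MemLp (f i) 4 μ) : MemLp (∑ i, f i) 2 μ :=
    memLp_finsetSum' _ fun i _ ↦ (hf i).mono_exponent (by norm_num)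
  have expansion := integral_sq_mul_sq_eq_add_jointCumulant₄ μ (∑ i, ξ i) (∑ i, η i)
  have cauchy_schwarz := sq_integral_mul_le (memLp_sum hξ4) (memLp_sum hη4)
  have cumulant_le := (abs_le.1 (hm.abs_jointCumulant₄_sum_le hD hD' hξ hξ hη hη hξ_mean hξ_mean
    hη_mean hη_mean hξ4 hξ4 hη4 hη4)).2
  have double_sum : ∑ i, (μ[ξ i ^ 4] + μ[ξ i ^ 4] + μ[η i ^ 4] + μ[η i ^ 4]) =
      2 * ∑ i, (μ[ξ i ^ 4] + μ[η i ^ 4]) := by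
    rw [Finset.mul_sum]
    exact Finset.sum_congr rfl fun i _ ↦ by ring
  rw [double_sum] at cumulant_le
  simp only [Pi.mul_apply, Pi.pow_apply, Finset.sum_apply] at expansion cauchy_schwarz cumulant_le
  simp only [Even.pow_abs (by decide : Even 4)]
  linarith

theorem stmt_16
    {Ω : Type*} [MeasurableSpace Ω] {μ : Measure Ω} [IsProbabilityMeasure μ]
    {ι : Type*} [Fintype ι] [DecidableEq ι]
    (X : ι → Ω → ℝ) (A B Bstar Cstar Dstar : ι → Finset ι)
    (hXmeas : ∀ i, Measurable (X i))
    (hiA : ∀ i, i ∈ A i) (hAB : ∀ i, A i ⊆ B i) (hBBstar : ∀ i, B i ⊆ Bstar i)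
    (hBstarCstar : ∀ i, Bstar i ⊆ Cstar i) (hCstarDstar : ∀ i, Cstar i ⊆ Dstar i)
    (hLD1 : ∀ i, IndepFun (X i) (fun ω => fun j : ((A i)ᶜ : Finset ι) => X j.1 ω) μ)
    (hLD2 : ∀ i, IndepFun (fun ω => fun j : (A i : Finset ι) => X j.1 ω)
      (fun ω => fun j : ((B i)ᶜ : Finset ι) => X j.1 ω) μ)
    (hLD3 : ∀ i, IndepFun (fun ω => fun j : (A i : Finset ι) => X j.1 ω)
      (fun ω => fun l : ((Bstar i)ᶜ : Finset ι) =>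
        fun j : (A l.1 : Finset ι) => X j.1 ω) μ)
    (hLD4 : ∀ i, IndepFun (fun ω => fun l : (Bstar i : Finset ι) =>
        fun j : (A l.1 : Finset ι) => X j.1 ω)
      (fun ω => fun l : ((Cstar i)ᶜ : Finset ι) =>
        fun j : (A l.1 : Finset ι) => X j.1 ω) μ)
    (hLD5 : ∀ i, IndepFun (fun ω => fun l : (Cstar i : Finset ι) =>
        fun j : (A l.1 : Finset ι) => X j.1 ω)
      (fun ω => fun l : ((Dstar i)ᶜ : Finset ι) =>
        fun j : (A l.1 : Finset ι) => X j.1 ω) μ)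
    (ξ η : ι → Ω → ℝ)
    (hξfun : ∀ i, ∃ g : ℝ → ℝ, Measurable g ∧ ∀ ω, ξ i ω = g (X i ω))
    (hξmean : ∀ i, ∫ ω, ξ i ω ∂μ = 0)
    (hξ4 : ∀ i, Integrable (fun ω => (ξ i ω) ^ 4) μ)
    (hηfun : ∀ i, ∃ g : (↥(A i) → ℝ) → ℝ, Measurable g ∧
      ∀ ω, η i ω = g (fun j => X j.1 ω))
    (hηmean : ∀ i, ∫ ω, η i ω ∂μ = 0)
    (hη4 : ∀ i, Integrable (fun ω => (η i ω) ^ 4) μ)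
    (T S : Ω → ℝ) (hT : ∀ ω, T ω = ∑ i, ξ i ω) (hS : ∀ ω, S ω = ∑ i, η i ω)
    (κ₂ : ℕ)
    (hκ₂ : κ₂ = Finset.univ.sup fun i => max (Dstar i).card
      (Finset.univ.filter fun j => i ∈ Dstar j).card) :
    (∫ ω, (T ω) ^ 2 * (S ω) ^ 2 ∂μ) ≤
      3 * (∫ ω, (T ω) ^ 2 ∂μ) * (∫ ω, (S ω) ^ 2 ∂μ) +
        12 * (κ₂ : ℝ) ^ 3 * ∑ i, ((∫ ω, |ξ i ω| ^ 4 ∂μ) + ∫ ω, |η i ω| ^ 4 ∂μ) := by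
  obtain rfl : T = fun ω ↦ ∑ i, ξ i ω := funext hT
  obtain rfl : S = fun ω ↦ ∑ i, η i ω := funext hS
  have hκ (i : ι) : max #(Dstar i) #{j | i ∈ Dstar j} ≤ κ₂ :=
    hκ₂ ▸ Finset.le_sup (f := fun i ↦ max #(Dstar i) #{j | i ∈ Dstar j}) (Finset.mem_univ i)
  have hm := locallyDependent_comap_of_indepFun (Y := fun l ω (j : A l) ↦ X j ω)
    (fun l ↦ measurable_pi_lambda _ fun j ↦ hXmeas j) (fun i ↦ hBBstar i (hAB i (hiA i)))
    hBstarCstar hCstarDstar hLD3 hLD4 hLD5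
  have hξ (i : ι) : Measurable[.comap (fun ω (j : A i) ↦ X j ω) inferInstance] (ξ i) := by
    obtain ⟨g, hg, hξg⟩ := hξfun i
    rw [funext hξg]
    exact hg.comp ((measurable_pi_apply (⟨i, hiA i⟩ : A i)).comp
      (comap_measurable fun ω (j : A i) ↦ X j ω))
  have hη (i : ι) : Measurable[.comap (fun ω (j : A i) ↦ X j ω) inferInstance] (η i) := by
    obtain ⟨g, hg, hηg⟩ := hηfun i
    rw [funext hηg]
    exact hg.comp (comap_measurable _)
  refine (stmt_16_general hm hξ hξmean hξ4 hη hηmean hη4 (fun i ↦ (le_max_left _ _).trans (hκ i))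
    fun i ↦ (le_max_right _ _).trans (hκ i)).trans ?_
  gcongr
  norm_num
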